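/- Let U ⊆ ℂ be open and connected with 0 ∉ U, let m, m̃, θ0, θ1 ∈ ℂ be constants with θ∞ := m̃ − m, and let w1, w2, w3, w̃1, w̃2, w̃3 : U → ℂ be differentiable functions satisfying the system (P5sys): t·w1′ = w̃2·w̃3, t·w̃1′ = −w2·w3, t·w2′ = −w̃1·w̃3, t·w̃2′ = w1·w3, t·w3′ = −(t − (m − m̃))·w3 − t·w̃1·w̃2, t·w̃3′ = (t − (m − m̃))·w̃3 + t·w1·w2, together with the first-integral relations w1·w̃1 + w2·w̃2 = θ0 and w1·w2·w3 + w̃1·w̃2·w̃3 + w3·w̃3 + (θ∞/2)·(w2·w̃2 − w1·w̃1) = (θ1² − θ0² − θ∞²)/4 identically on U. Assume w1, w2, w̃2 are nonvanishing on U, and that w2·w̃2 − (θ0+θ1−θ∞)/2 and w̃3 + w1·w2 are nonvanishing on U. Define y := w2·w̃2·(w̃3 + w1·w2) / ((w2·w̃2 − (θ0+θ1−θ∞)/2)·w1·w2), z := w2·w̃2 − θ0, u := −w1/w̃2. Then (y, z, u) satisfy the system (C.40): t·y′ = t·y − 2z(y−1)² − ((θ0 − θ1 + θ∞)/2)·(y−1)²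 + (θ0+θ1)·(y−1); t·z′ = y·z·(z + (θ0−θ1+θ∞)/2) − (1/y)·(z+θ0)·(z + (θ0+θ1+θ∞)/2); t·u′/u = −2z − θ0 + y·(z + (θ0−θ1+θ∞)/2) + (1/y)·(z + (θ0+θ1+θ∞)/2). -/

import Mathlib

/-!
Put `x = w₂ w̃₂`, `p = w₁ w₂`, `q = w̃₃ + p`, and let `κ, κ' = (θ₀ ± θ₁ - θ∞) / 2`, so that
`y = x q / ((x - κ) p)`. Since `w₁ w̃₁ = θ₀ - x`, the second first integral factors as
`w₃ q = (x - κ) (y (x - θ₀) - (x - κ'))`. Hence `w₁ w₂ w₃` and `w̃₁ w̃₂ w̃₃`, as well as the ratios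
`w̃₃ / p` and `w̃₃ / q`, are rational in `x` and `y`. These are all that occurs in `t x'` and in
the logarithmic derivatives of `p`, `q` and `w₁ / w̃₂`, so the system closes up in `(x, y)`.
-/

section Algebra

variable {K : Type*} [Field K] {θ₀ κ κ' w₁ w₂ w₃ wt₁ wt₂ wt₃ : K}

/-- The value of the Painlevé V unknown `y` in terms of the values of the `w`'s, where
`κ = (θ₀ + θ₁ - θ∞) / 2`. -/
def p5Y (κ w₁ w₂ wt₂ wt₃ : K) : K :=
  w₂ * wt₂ * (wt₃ + w₁ * w₂) / ((w₂ * wt₂ - κ) * (w₁ * w₂))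

/-- The values of the `w`'s lie on a common level set of the two first integrals of (P5sys). The
level of the second is encoded by `κ, κ' = (θ₀ ± θ₁ - θ∞) / 2`, so that `θ∞ = θ₀ - κ - κ'`, and
`w₁ w̃₁` has been eliminated from it by means of the first. -/
structure P5FirstIntegrals (θ₀ κ κ' w₁ w₂ w₃ wt₁ wt₂ wt₃ : K) : Prop where
  quadratic : w₁ * wt₁ + w₂ * wt₂ = θ₀
  cubic : w₁ * w₂ * w₃ + wt₁ * wt₂ * wt₃ + w₃ * wt₃ + (θ₀ - κ - κ') * (w₂ * wt₂) = -(κ * κ')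

theorem P5FirstIntegrals.of_theta [NeZero (2 : K)] {θ₁ θi : K}
    (h₁ : w₁ * wt₁ + w₂ * wt₂ = θ₀)
    (h₂ : w₁ * w₂ * w₃ + wt₁ * wt₂ * wt₃ + w₃ * wt₃ + (θi / 2) * (w₂ * wt₂ - w₁ * wt₁)
      = (θ₁ ^ 2 - θ₀ ^ 2 - θi ^ 2) / 4) :
    P5FirstIntegrals θ₀ ((θ₀ + θ₁ - θi) / 2) ((θ₀ - θ₁ - θi) / 2) w₁ w₂ w₃ wt₁ wt₂ wt₃ where
  quadratic := h₁
  cubic := by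
    have h4 : (4 : K) = 2 * 2 := by norm_num
    rw [h4] at h₂
    field_simp at h₂ ⊢
    linear_combination h₂ + 2 * θi * h₁

theorem p5Y_ne_zero (hw₁ : w₁ ≠ 0) (hw₂ : w₂ ≠ 0) (hwt₂ : wt₂ ≠ 0) (hκ : w₂ * wt₂ - κ ≠ 0)
    (hq : wt₃ + w₁ * w₂ ≠ 0) : p5Y κ w₁ w₂ wt₂ wt₃ ≠ 0 := by
  unfold p5Y
  positivity

theorem p5Y_mul (hw₁ : w₁ ≠ 0) (hw₂ : w₂ ≠ 0) (hκ : w₂ * wt₂ - κ ≠ 0) :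
    p5Y κ w₁ w₂ wt₂ wt₃ * ((w₂ * wt₂ - κ) * (w₁ * w₂)) = w₂ * wt₂ * (wt₃ + w₁ * w₂) :=
  div_mul_cancel₀ _ (by positivity)

theorem wt₃_div_mul_eq_p5Y (hw₁ : w₁ ≠ 0) (hw₂ : w₂ ≠ 0) (hwt₂ : wt₂ ≠ 0) (hκ : w₂ * wt₂ - κ ≠ 0) :
    wt₃ / (w₁ * w₂) = p5Y κ w₁ w₂ wt₂ wt₃ * (w₂ * wt₂ - κ) / (w₂ * wt₂) - 1 := by
  rw [div_sub_one (by positivity), div_eq_div_iff (by positivity) (by positivity)]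
  linear_combination -p5Y_mul (wt₃ := wt₃) hw₁ hw₂ hκ

theorem wt₃_div_add_eq_p5Y (hw₁ : w₁ ≠ 0) (hw₂ : w₂ ≠ 0) (hwt₂ : wt₂ ≠ 0) (hκ : w₂ * wt₂ - κ ≠ 0)
    (hq : wt₃ + w₁ * w₂ ≠ 0) :
    wt₃ / (wt₃ + w₁ * w₂) = 1 - w₂ * wt₂ / (p5Y κ w₁ w₂ wt₂ wt₃ * (w₂ * wt₂ - κ)) := by
  have hy : p5Y κ w₁ w₂ wt₂ wt₃ ≠ 0 := p5Y_ne_zero hw₁ hw₂ hwt₂ hκ hq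
  rw [one_sub_div (by positivity), div_eq_div_iff hq (by positivity)]
  linear_combination -p5Y_mul (wt₃ := wt₃) hw₁ hw₂ hκ

namespace P5FirstIntegrals

variable (h : P5FirstIntegrals θ₀ κ κ' w₁ w₂ w₃ wt₁ wt₂ wt₃)
include h

theorem wt₁_mul_wt₂_mul_wt₃ (hw₁ : w₁ ≠ 0) (hw₂ : w₂ ≠ 0) (hκ : w₂ * wt₂ - κ ≠ 0) :
    wt₁ * wt₂ * wt₃ =
      (θ₀ - w₂ * wt₂) * (p5Y κ w₁ w₂ wt₂ wt₃ * (w₂ * wt₂ - κ) - w₂ * wt₂) := by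
  apply mul_left_cancel₀ (mul_ne_zero hw₁ hw₂)
  linear_combination w₂ * wt₂ * wt₃ * h.quadratic
    - (θ₀ - w₂ * wt₂) * p5Y_mul (wt₃ := wt₃) hw₁ hw₂ hκ

theorem w₃_mul_add (hw₁ : w₁ ≠ 0) (hw₂ : w₂ ≠ 0) (hκ : w₂ * wt₂ - κ ≠ 0) :
    w₃ * (wt₃ + w₁ * w₂) = (w₂ * wt₂ - κ) *
      (p5Y κ w₁ w₂ wt₂ wt₃ * (w₂ * wt₂ - θ₀) - (w₂ * wt₂ - κ')) := by
  linear_combination h.cubic - h.wt₁_mul_wt₂_mul_wt₃ hw₁ hw₂ hκ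

theorem w₁_mul_w₂_mul_w₃ (hw₁ : w₁ ≠ 0) (hw₂ : w₂ ≠ 0) (hwt₂ : wt₂ ≠ 0)
    (hκ : w₂ * wt₂ - κ ≠ 0) (hq : wt₃ + w₁ * w₂ ≠ 0) :
    w₁ * w₂ * w₃ =
      w₂ * wt₂ * (w₂ * wt₂ - θ₀ - (w₂ * wt₂ - κ') / p5Y κ w₁ w₂ wt₂ wt₃) := by
  have hy : p5Y κ w₁ w₂ wt₂ wt₃ ≠ 0 := p5Y_ne_zero hw₁ hw₂ hwt₂ hκ hq
  have hmul : p5Y κ w₁ w₂ wt₂ wt₃ * (w₁ * w₂ * w₃) =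
      w₂ * wt₂ * (p5Y κ w₁ w₂ wt₂ wt₃ * (w₂ * wt₂ - θ₀) - (w₂ * wt₂ - κ')) := by
    apply mul_left_cancel₀ hκ
    linear_combination w₃ * p5Y_mul (wt₃ := wt₃) hw₁ hw₂ hκ
      + w₂ * wt₂ * h.w₃_mul_add hw₁ hw₂ hκ
  apply mul_left_cancel₀ hy
  rw [hmul]
  field_simp

end P5FirstIntegrals

end Algebra

section Flow

variable {𝕜 : Type*} [NontriviallyNormedField 𝕜] {θ₀ θi κ κ' t : 𝕜}
  {w₁ w₂ w₃ wt₁ wt₂ wt₃ : 𝕜 → 𝕜}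

/-- The equations of (P5sys) for `w₁, w₂, w̃₂, w̃₃` at the point `t`, with `θi` standing for `θ∞`.
The two others are left out because the first integrals determine `w₃` and `w̃₁`. -/
structure IsP5FlowAt (θi : 𝕜) (w₁ w₂ w₃ wt₁ wt₂ wt₃ : 𝕜 → 𝕜) (t : 𝕜) : Prop where
  differentiableAt_w₁ : DifferentiableAt 𝕜 w₁ t
  differentiableAt_w₂ : DifferentiableAt 𝕜 w₂ t
  differentiableAt_wt₂ : DifferentiableAt 𝕜 wt₂ t
  differentiableAt_wt₃ : DifferentiableAt 𝕜 wt₃ t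
  mul_deriv_w₁ : t * deriv w₁ t = wt₂ t * wt₃ t
  mul_deriv_w₂ : t * deriv w₂ t = -(wt₁ t * wt₃ t)
  mul_deriv_wt₂ : t * deriv wt₂ t = w₁ t * w₃ t
  mul_deriv_wt₃ : t * deriv wt₃ t = (t + θi) * wt₃ t + t * (w₁ t * w₂ t)

namespace IsP5FlowAt

section

variable (hf : IsP5FlowAt θi w₁ w₂ w₃ wt₁ wt₂ wt₃ t)
include hf

theorem differentiableAt_w₂_mul_wt₂ : DifferentiableAt 𝕜 (fun s => w₂ s * wt₂ s) t :=
  hf.differentiableAt_w₂.fun_mul hf.differentiableAt_wt₂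

theorem differentiableAt_w₁_mul_w₂ : DifferentiableAt 𝕜 (fun s => w₁ s * w₂ s) t :=
  hf.differentiableAt_w₁.fun_mul hf.differentiableAt_w₂

theorem differentiableAt_wt₃_add : DifferentiableAt 𝕜 (fun s => wt₃ s + w₁ s * w₂ s) t :=
  hf.differentiableAt_wt₃.fun_add hf.differentiableAt_w₁_mul_w₂

theorem differentiableAt_p5Y (hw₁ : w₁ t ≠ 0) (hw₂ : w₂ t ≠ 0) (hκ : w₂ t * wt₂ t - κ ≠ 0) :
    DifferentiableAt 𝕜 (fun s => p5Y κ (w₁ s) (w₂ s) (wt₂ s) (wt₃ s)) t :=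
  (hf.differentiableAt_w₂_mul_wt₂.fun_mul hf.differentiableAt_wt₃_add).fun_div
    ((hf.differentiableAt_w₂_mul_wt₂.sub_const κ).fun_mul hf.differentiableAt_w₁_mul_w₂)
    (mul_ne_zero hκ (mul_ne_zero hw₁ hw₂))

theorem mul_deriv_w₂_mul_wt₂ :
    t * deriv (fun s => w₂ s * wt₂ s) t = w₁ t * w₂ t * w₃ t - wt₁ t * wt₂ t * wt₃ t := by
  rw [deriv_fun_mul hf.differentiableAt_w₂ hf.differentiableAt_wt₂]
  linear_combination wt₂ t * hf.mul_deriv_w₂ + w₂ t * hf.mul_deriv_wt₂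

theorem mul_deriv_w₁_mul_w₂ :
    t * deriv (fun s => w₁ s * w₂ s) t = (w₂ t * wt₂ t - w₁ t * wt₁ t) * wt₃ t := by
  rw [deriv_fun_mul hf.differentiableAt_w₁ hf.differentiableAt_w₂]
  linear_combination w₂ t * hf.mul_deriv_w₁ + w₁ t * hf.mul_deriv_w₂

theorem mul_deriv_wt₃_add :
    t * deriv (fun s => wt₃ s + w₁ s * w₂ s) t =
      t * (wt₃ t + w₁ t * w₂ t) + (θi + w₂ t * wt₂ t - w₁ t * wt₁ t) * wt₃ t := by
  rw [deriv_fun_add hf.differentiableAt_wt₃ hf.differentiableAt_w₁_mul_w₂]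
  linear_combination hf.mul_deriv_wt₃ + hf.mul_deriv_w₁_mul_w₂

theorem logDeriv_p5Y (hw₁ : w₁ t ≠ 0) (hw₂ : w₂ t ≠ 0) (hwt₂ : wt₂ t ≠ 0)
    (hκ : w₂ t * wt₂ t - κ ≠ 0) (hq : wt₃ t + w₁ t * w₂ t ≠ 0) :
    logDeriv (fun s => p5Y κ (w₁ s) (w₂ s) (wt₂ s) (wt₃ s)) t =
      logDeriv (fun s => w₂ s * wt₂ s) t + logDeriv (fun s => wt₃ s + w₁ s * w₂ s) t
        - (logDeriv (fun s => w₂ s * wt₂ s - κ) t + logDeriv (fun s => w₁ s * w₂ s) t) := by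
  have hx := hf.differentiableAt_w₂_mul_wt₂
  have hp := hf.differentiableAt_w₁_mul_w₂
  have hq' := hf.differentiableAt_wt₃_add
  unfold p5Y
  rw [logDeriv_div t (by positivity) (by positivity) (hx.fun_mul hq')
      ((hx.sub_const κ).fun_mul hp),
    logDeriv_mul t (by positivity) hq hx hq',
    logDeriv_mul t hκ (by positivity) (hx.sub_const κ) hp]

theorem mul_logDeriv_w₁_div_wt₂ (hw₁ : w₁ t ≠ 0) (hwt₂ : wt₂ t ≠ 0) :
    t * logDeriv (fun s => w₁ s / wt₂ s) t = wt₂ t * wt₃ t / w₁ t - w₁ t * w₃ t / wt₂ t := by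
  rw [logDeriv_div t hw₁ hwt₂ hf.differentiableAt_w₁ hf.differentiableAt_wt₂, mul_sub,
    logDeriv_apply, logDeriv_apply, ← mul_div_assoc, ← mul_div_assoc, hf.mul_deriv_w₁,
    hf.mul_deriv_wt₂]

end

section

variable (hf : IsP5FlowAt (θ₀ - κ - κ') w₁ w₂ w₃ wt₁ wt₂ wt₃ t)
  (hI : P5FirstIntegrals θ₀ κ κ' (w₁ t) (w₂ t) (w₃ t) (wt₁ t) (wt₂ t) (wt₃ t))
  (hw₁ : w₁ t ≠ 0) (hw₂ : w₂ t ≠ 0) (hwt₂ : wt₂ t ≠ 0) (hκ : w₂ t * wt₂ t - κ ≠ 0)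
include hf hI hw₁ hw₂ hwt₂ hκ

theorem mul_logDeriv_w₁_mul_w₂ :
    t * logDeriv (fun s => w₁ s * w₂ s) t = (2 * (w₂ t * wt₂ t) - θ₀) *
      (p5Y κ (w₁ t) (w₂ t) (wt₂ t) (wt₃ t) * (w₂ t * wt₂ t - κ) / (w₂ t * wt₂ t) - 1) := by
  rw [logDeriv_apply, ← mul_div_assoc, hf.mul_deriv_w₁_mul_w₂, mul_div_assoc,
    wt₃_div_mul_eq_p5Y hw₁ hw₂ hwt₂ hκ, ← hI.quadratic]
  ring

variable (hq : wt₃ t + w₁ t * w₂ t ≠ 0)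
include hq

theorem mul_deriv_w₂_mul_wt₂_eq_p5Y :
    t * deriv (fun s => w₂ s * wt₂ s) t =
      p5Y κ (w₁ t) (w₂ t) (wt₂ t) (wt₃ t) * (w₂ t * wt₂ t - θ₀) * (w₂ t * wt₂ t - κ)
        - 1 / p5Y κ (w₁ t) (w₂ t) (wt₂ t) (wt₃ t) * (w₂ t * wt₂ t) * (w₂ t * wt₂ t - κ') := by
  rw [hf.mul_deriv_w₂_mul_wt₂, hI.w₁_mul_w₂_mul_w₃ hw₁ hw₂ hwt₂ hκ hq,
    hI.wt₁_mul_wt₂_mul_wt₃ hw₁ hw₂ hκ]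
  ring

theorem mul_logDeriv_w₁_div_wt₂_eq_p5Y :
    t * logDeriv (fun s => w₁ s / wt₂ s) t =
      θ₀ - 2 * (w₂ t * wt₂ t) + p5Y κ (w₁ t) (w₂ t) (wt₂ t) (wt₃ t) * (w₂ t * wt₂ t - κ)
        + 1 / p5Y κ (w₁ t) (w₂ t) (wt₂ t) (wt₃ t) * (w₂ t * wt₂ t - κ') := by
  have hwt₃ : wt₂ t * wt₃ t / w₁ t =
      p5Y κ (w₁ t) (w₂ t) (wt₂ t) (wt₃ t) * (w₂ t * wt₂ t - κ) - w₂ t * wt₂ t := by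
    calc
      _ = w₂ t * wt₂ t * (wt₃ t / (w₁ t * w₂ t)) := by field_simp
      _ = _ := by
        rw [wt₃_div_mul_eq_p5Y hw₁ hw₂ hwt₂ hκ]
        field_simp
  have hw₃ : w₁ t * w₃ t / wt₂ t =
      w₂ t * wt₂ t - θ₀ - (w₂ t * wt₂ t - κ') / p5Y κ (w₁ t) (w₂ t) (wt₂ t) (wt₃ t) := by
    rw [div_eq_iff hwt₂]
    apply mul_left_cancel₀ hw₂
    linear_combination hI.w₁_mul_w₂_mul_w₃ hw₁ hw₂ hwt₂ hκ hq
  rw [hf.mul_logDeriv_w₁_div_wt₂ hw₁ hwt₂, hwt₃, hw₃]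
  ring

theorem mul_logDeriv_wt₃_add :
    t * logDeriv (fun s => wt₃ s + w₁ s * w₂ s) t = t + (2 * (w₂ t * wt₂ t) - κ - κ') *
      (1 - w₂ t * wt₂ t / (p5Y κ (w₁ t) (w₂ t) (wt₂ t) (wt₃ t) * (w₂ t * wt₂ t - κ))) := by
  rw [logDeriv_apply, ← mul_div_assoc, hf.mul_deriv_wt₃_add, add_div, mul_div_cancel_right₀ _ hq,
    mul_div_assoc, wt₃_div_add_eq_p5Y hw₁ hw₂ hwt₂ hκ hq, ← hI.quadratic]
  ring

theorem mul_deriv_p5Y :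
    t * deriv (fun s => p5Y κ (w₁ s) (w₂ s) (wt₂ s) (wt₃ s)) t =
      t * p5Y κ (w₁ t) (w₂ t) (wt₂ t) (wt₃ t)
        - (2 * (w₂ t * wt₂ t) - θ₀ - κ) * (p5Y κ (w₁ t) (w₂ t) (wt₂ t) (wt₃ t) - 1) ^ 2
        + (θ₀ + κ - κ') * (p5Y κ (w₁ t) (w₂ t) (wt₂ t) (wt₃ t) - 1) := by
  have hx := hf.mul_deriv_w₂_mul_wt₂_eq_p5Y hI hw₁ hw₂ hwt₂ hκ hq
  have hp := hf.mul_logDeriv_w₁_mul_w₂ hI hw₁ hw₂ hwt₂ hκ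
  have hq' := hf.mul_logDeriv_wt₃_add hI hw₁ hw₂ hwt₂ hκ hq
  have hlog := hf.logDeriv_p5Y hw₁ hw₂ hwt₂ hκ hq
  have hy : p5Y κ (w₁ t) (w₂ t) (wt₂ t) (wt₃ t) ≠ 0 := p5Y_ne_zero hw₁ hw₂ hwt₂ hκ hq
  rw [logDeriv_apply, div_eq_iff hy] at hlog
  rw [hlog, logDeriv_apply (fun s => w₂ s * wt₂ s), logDeriv_apply (fun s => w₂ s * wt₂ s - κ),
    deriv_sub_const]
  generalize p5Y κ (w₁ t) (w₂ t) (wt₂ t) (wt₃ t) = y at *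
  calc
    _ = y * (t * deriv (fun s => w₂ s * wt₂ s) t * (1 / (w₂ t * wt₂ t) - 1 / (w₂ t * wt₂ t - κ))
          + t * logDeriv (fun s => wt₃ s + w₁ s * w₂ s) t
          - t * logDeriv (fun s => w₁ s * w₂ s) t) := by ring
    _ = _ := by
      rw [hx, hp, hq']
      field_simp
      ring

end

end IsP5FlowAt

theorem stmt_2_general [NeZero (2 : 𝕜)] {θ₁ : 𝕜} {y z u : 𝕜 → 𝕜}
    (hf : IsP5FlowAt θi w₁ w₂ w₃ wt₁ wt₂ wt₃ t)
    (hint₁ : w₁ t * wt₁ t + w₂ t * wt₂ t = θ₀)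
    (hint₂ : w₁ t * w₂ t * w₃ t + wt₁ t * wt₂ t * wt₃ t + w₃ t * wt₃ t
      + (θi / 2) * (w₂ t * wt₂ t - w₁ t * wt₁ t) = (θ₁ ^ 2 - θ₀ ^ 2 - θi ^ 2) / 4)
    (hw₁ : w₁ t ≠ 0) (hw₂ : w₂ t ≠ 0) (hwt₂ : wt₂ t ≠ 0)
    (hκ : w₂ t * wt₂ t - (θ₀ + θ₁ - θi) / 2 ≠ 0) (hq : wt₃ t + w₁ t * w₂ t ≠ 0)
    (hy : y = fun s => p5Y ((θ₀ + θ₁ - θi) / 2) (w₁ s) (w₂ s) (wt₂ s) (wt₃ s))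
    (hz : z = fun s => w₂ s * wt₂ s - θ₀) (hu : u = fun s => -(w₁ s / wt₂ s)) :
    DifferentiableAt 𝕜 y t ∧ DifferentiableAt 𝕜 z t ∧ DifferentiableAt 𝕜 u t ∧
    t * deriv y t = t * y t - 2 * z t * (y t - 1) ^ 2
      - ((θ₀ - θ₁ + θi) / 2) * (y t - 1) ^ 2 + (θ₀ + θ₁) * (y t - 1) ∧
    t * deriv z t = y t * z t * (z t + (θ₀ - θ₁ + θi) / 2)
      - (1 / y t) * (z t + θ₀) * (z t + (θ₀ + θ₁ + θi) / 2) ∧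
    t * deriv u t / u t = -(2 * z t) - θ₀ + y t * (z t + (θ₀ - θ₁ + θi) / 2)
      + (1 / y t) * (z t + (θ₀ + θ₁ + θi) / 2) := by
  subst hy hz hu
  have hI := P5FirstIntegrals.of_theta hint₁ hint₂
  have hκ₁ : (θ₀ - θ₁ + θi) / 2 = θ₀ - (θ₀ + θ₁ - θi) / 2 := by field_simp; ring
  have hκ₂ : (θ₀ + θ₁ + θi) / 2 = θ₀ - (θ₀ - θ₁ - θi) / 2 := by field_simp; ring
  have hθ₁ : θ₁ = (θ₀ + θ₁ - θi) / 2 - (θ₀ - θ₁ - θi) / 2 := by field_simp; ring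
  have hθi : θi = θ₀ - (θ₀ + θ₁ - θi) / 2 - (θ₀ - θ₁ - θi) / 2 := by field_simp; ring
  have hf' : IsP5FlowAt (θ₀ - (θ₀ + θ₁ - θi) / 2 - (θ₀ - θ₁ - θi) / 2) w₁ w₂ w₃ wt₁ wt₂ wt₃ t :=
    hθi ▸ hf
  have hy' := hf'.mul_deriv_p5Y hI hw₁ hw₂ hwt₂ hκ hq
  have hz' := hf'.mul_deriv_w₂_mul_wt₂_eq_p5Y hI hw₁ hw₂ hwt₂ hκ hq
  have hu' := hf'.mul_logDeriv_w₁_div_wt₂_eq_p5Y hI hw₁ hw₂ hwt₂ hκ hq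
  refine ⟨hf.differentiableAt_p5Y hw₁ hw₂ hκ, hf.differentiableAt_w₂_mul_wt₂.sub_const θ₀,
    (hf.differentiableAt_w₁.fun_div hf.differentiableAt_wt₂ hwt₂).fun_neg, ?_, ?_, ?_⟩
  · linear_combination hy' + (p5Y _ _ _ _ _ - 1) ^ 2 * hκ₁ - (p5Y _ _ _ _ _ - 1) * hθ₁
  · rw [deriv_sub_const, hz', hκ₁, hκ₂]
    ring
  · rw [deriv.fun_neg, mul_neg, neg_div_neg_eq, mul_div_assoc, ← logDeriv_apply, hu', hκ₁, hκ₂]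
    ring

end Flow

/-- From solutions of (P5sys) with the first-integral normalizations, the functions
y, z, u defined in (P5-eqn) satisfy the system (C.40). -/
theorem stmt_2
    (U : Set ℂ) (hU : IsOpen U) (hUconn : IsPreconnected U) (hU0 : (0 : ℂ) ∉ U)
    (m mt th0 th1 thI : ℂ) (hthI : thI = mt - m)
    (w1 w2 w3 wt1 wt2 wt3 : ℂ → ℂ)
    (hd1 : ∀ t ∈ U, DifferentiableAt ℂ w1 t)
    (hd2 : ∀ t ∈ U, DifferentiableAt ℂ w2 t)
    (hd3 : ∀ t ∈ U, DifferentiableAt ℂ w3 t)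
    (hdt1 : ∀ t ∈ U, DifferentiableAt ℂ wt1 t)
    (hdt2 : ∀ t ∈ U, DifferentiableAt ℂ wt2 t)
    (hdt3 : ∀ t ∈ U, DifferentiableAt ℂ wt3 t)
    (he1 : ∀ t ∈ U, t * deriv w1 t = wt2 t * wt3 t)
    (he2 : ∀ t ∈ U, t * deriv wt1 t = -(w2 t * w3 t))
    (he3 : ∀ t ∈ U, t * deriv w2 t = -(wt1 t * wt3 t))
    (he4 : ∀ t ∈ U, t * deriv wt2 t = w1 t * w3 t)
    (he5 : ∀ t ∈ U, t * deriv w3 t = -(t - (m - mt)) * w3 t - t * (wt1 t * wt2 t))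
    (he6 : ∀ t ∈ U, t * deriv wt3 t = (t - (m - mt)) * wt3 t + t * (w1 t * w2 t))
    (hint1 : ∀ t ∈ U, w1 t * wt1 t + w2 t * wt2 t = th0)
    (hint2 : ∀ t ∈ U, w1 t * w2 t * w3 t + wt1 t * wt2 t * wt3 t + w3 t * wt3 t
        + (thI / 2) * (w2 t * wt2 t - w1 t * wt1 t) = (th1 ^ 2 - th0 ^ 2 - thI ^ 2) / 4)
    (hn1 : ∀ t ∈ U, w1 t ≠ 0) (hn2 : ∀ t ∈ U, w2 t ≠ 0) (hn3 : ∀ t ∈ U, wt2 t ≠ 0)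
    (hn4 : ∀ t ∈ U, w2 t * wt2 t - (th0 + th1 - thI) / 2 ≠ 0)
    (hn5 : ∀ t ∈ U, wt3 t + w1 t * w2 t ≠ 0)
    (y z u : ℂ → ℂ)
    (hy : y = fun t => w2 t * wt2 t * (wt3 t + w1 t * w2 t)
      / ((w2 t * wt2 t - (th0 + th1 - thI) / 2) * (w1 t * w2 t)))
    (hz : z = fun t => w2 t * wt2 t - th0)
    (hu : u = fun t => -(w1 t / wt2 t)) :
    ∀ t ∈ U,
      DifferentiableAt ℂ y t ∧ DifferentiableAt ℂ z t ∧ DifferentiableAt ℂ u t ∧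
      t * deriv y t = t * y t - 2 * z t * (y t - 1) ^ 2
        - ((th0 - th1 + thI) / 2) * (y t - 1) ^ 2 + (th0 + th1) * (y t - 1) ∧
      t * deriv z t = y t * z t * (z t + (th0 - th1 + thI) / 2)
        - (1 / y t) * (z t + th0) * (z t + (th0 + th1 + thI) / 2) ∧
      t * deriv u t / u t = -(2 * z t) - th0 + y t * (z t + (th0 - th1 + thI) / 2)
        + (1 / y t) * (z t + (th0 + th1 + thI) / 2) := by
  subst hthI
  exact fun t ht => stmt_2_general ⟨hd1 t ht, hd2 t ht, hdt2 t ht, hdt3 t ht, he1 t ht, he3 t ht,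
    he4 t ht, by linear_combination he6 t ht⟩ (hint1 t ht) (hint2 t ht) (hn1 t ht) (hn2 t ht)
    (hn3 t ht) (hn4 t ht) (hn5 t ht) hy hz hu
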